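/- Assume the element setup with B_p = Z₁ × Z a product of finite-dimensional real vector spaces, and identify B_p* with Z₁* × Z*. Let θ ∈ [0,1]. Suppose (f_p, f_q, (y₁, y_Z), (y*₁, y*_Z), e_p, e_q, (u*₁, u*_Z), (u₁, u_Z)) belongs to the generalized Stokes–Dirac structure D_h, and suppose (u_Z, w_R, u*_Z, w*_R, y*_Z, y*_R, y_Z, y_R) belongs to the interconnection structure D_c on Z (the interface input and output ports of D_h are identified with the left ports of D_c). Then the power balance of the composition D₁ ∘ D_c holds: ⟨e_p|f_p⟩_p + ⟨e_q|f_q⟩_q + y*₁(u₁) + u*₁(y₁) − y*_R(w_R) − w*_R(y_R) = 0. -/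

import Mathlib

/-- Power balance of the composition `D₁ ∘ D_c`: for an element whose boundary space is
`B_p = Z₁ × Z` (with dual identified with `Z₁* × Z*`), if a tuple belongs to the
generalized Stokes-Dirac structure `D_h` and its interface ports are coupled, via the
interconnection structure `D_c` on `Z`, to the right-hand ports
`(w_R, w*_R, y*_R, y_R)`, then
`⟨e_p|f_p⟩_p + ⟨e_q|f_q⟩_q + y*₁(u₁) + u*₁(y₁) − y*_R(w_R) − w*_R(y_R) = 0`. -/
theorem composition_with_interconnection_power_balance
    (n p q : ℤ) (hpq : p + q = n + 1)
    {E_p F_p E_q F_q B_q Z₁ Z : Type*}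
    [AddCommGroup E_p] [Module ℝ E_p] [FiniteDimensional ℝ E_p]
    [AddCommGroup F_p] [Module ℝ F_p] [FiniteDimensional ℝ F_p]
    [AddCommGroup E_q] [Module ℝ E_q] [FiniteDimensional ℝ E_q]
    [AddCommGroup F_q] [Module ℝ F_q] [FiniteDimensional ℝ F_q]
    [AddCommGroup B_q] [Module ℝ B_q] [FiniteDimensional ℝ B_q]
    [AddCommGroup Z₁] [Module ℝ Z₁] [FiniteDimensional ℝ Z₁]
    [AddCommGroup Z] [Module ℝ Z] [FiniteDimensional ℝ Z]
    (pairP : E_p →ₗ[ℝ] F_p →ₗ[ℝ] ℝ)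
    (hP₁ : ∀ e : E_p, (∀ f : F_p, pairP e f = 0) → e = 0)
    (hP₂ : ∀ f : F_p, (∀ e : E_p, pairP e f = 0) → f = 0)
    (pairQ : E_q →ₗ[ℝ] F_q →ₗ[ℝ] ℝ)
    (hQ₁ : ∀ e : E_q, (∀ f : F_q, pairQ e f = 0) → e = 0)
    (hQ₂ : ∀ f : F_q, (∀ e : E_q, pairQ e f = 0) → f = 0)
    (dpq : E_q →ₗ[ℝ] F_p) (dqp : E_p →ₗ[ℝ] F_q)
    (trp : E_p →ₗ[ℝ] Z₁ × Z) (trq : E_q →ₗ[ℝ] B_q)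
    (Q : B_q →ₗ[ℝ] Module.Dual ℝ Z₁ × Module.Dual ℝ Z)
    (hibp : ∀ (w : E_q) (v : E_p),
      (-1 : ℝ) ^ (p * (n - p)) * pairP v (dpq w)
        = (-1 : ℝ) ^ p * pairQ w (dqp v)
          + ((Q (trq w)).1 (trp v).1 + (Q (trq w)).2 (trp v).2))
    (T_p : Module.Dual ℝ Z₁ × Module.Dual ℝ Z →ₗ[ℝ] F_p)
    (hTp : ∀ (v : E_p) (l : Module.Dual ℝ Z₁ × Module.Dual ℝ Z),
      pairP v (T_p l)
        = (-1 : ℝ) ^ ((p - 1) * (q - 1)) * (l.1 (trp v).1 + l.2 (trp v).2))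
    (T_q : Z₁ × Z →ₗ[ℝ] F_q)
    (hTq : ∀ (w : E_q) (u : Z₁ × Z),
      pairQ w (T_q u) = (Q (trq w)).1 u.1 + (Q (trq w)).2 u.2)
    (θ : ℝ) (hθ : θ ∈ Set.Icc (0 : ℝ) 1)
    (f_p : F_p) (f_q : F_q) (e_p : E_p) (e_q : E_q)
    (y₁ : Z₁) (y_Z : Z) (ystar₁ : Module.Dual ℝ Z₁) (ystarZ : Module.Dual ℝ Z)
    (u₁ : Z₁) (u_Z : Z) (ustar₁ : Module.Dual ℝ Z₁) (ustarZ : Module.Dual ℝ Z)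
    (wR : Z) (wstarR : Module.Dual ℝ Z) (ystarR : Module.Dual ℝ Z) (yR : Z)
    -- the tuple belongs to the generalized Stokes-Dirac structure `D_h`:
    (hfp : f_p = ((-1 : ℝ) ^ (p * q + 1)) • dpq e_q
        + (((-1 : ℝ) ^ (p * q + 1 + q)) * (1 / 2)) • T_p (Q (trq e_q))
        + ((-1 : ℝ) ^ (p * q + 1 + q)) • T_p (ustar₁, ustarZ))
    (hfq : f_q = dqp e_p + (((-1 : ℝ) ^ p) * (1 / 2)) • T_q (trp e_p)
        + ((-1 : ℝ) ^ p) • T_q (u₁, u_Z))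
    (hystar : (ystar₁, ystarZ) = -(((-1 : ℝ) ^ p) • Q (trq e_q)))
    (hy : (y₁, y_Z) = -(((-1 : ℝ) ^ p) • trp e_p))
    -- the interface ports of `D_h` are identified with the left ports of `D_c`:
    (hc₁ : u_Z = (θ - 1 / 2) • y_Z - θ • yR)
    (hc₂ : ustarZ = (1 / 2 - θ) • ystarZ + (θ - 1) • ystarR)
    (hc₃ : wR = (1 - θ) • y_Z + (θ - 1 / 2) • yR)
    (hc₄ : wstarR = θ • ystarZ + (1 / 2 - θ) • ystarR) :
    pairP e_p f_p + pairQ e_q f_q + ystar₁ u₁ + ustar₁ y₁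
      - ystarR wR - wstarR yR = 0 := by
  have hn : n - p = q - 1 := by linarith
  have hne : (-1 : ℝ) ≠ 0 := by norm_num
  have hsq (k : ℤ) : (-1 : ℝ) ^ k * (-1 : ℝ) ^ k = 1 := by
    rw [← mul_zpow]; norm_num
  have hinv (k : ℤ) : ((-1 : ℝ) ^ k)⁻¹ = (-1 : ℝ) ^ k := inv_eq_of_mul_eq_one_left (hsq k)
  have hsign_ibp : (-1 : ℝ) ^ (p * (n - p)) = (-1 : ℝ) ^ (p * q) * (-1 : ℝ) ^ p := by
    rw [hn, mul_sub, mul_one, zpow_sub₀ hne, div_eq_mul_inv, hinv]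
  have hsign_tr : (-1 : ℝ) ^ ((p - 1) * (q - 1))
      = -((-1 : ℝ) ^ (p * q) * (-1 : ℝ) ^ p * (-1 : ℝ) ^ q) := by
    rw [show (p - 1) * (q - 1) = p * q - p - q + 1 by ring, zpow_add₀ hne, zpow_sub₀ hne,
      zpow_sub₀ hne, div_eq_mul_inv, div_eq_mul_inv, hinv, hinv, zpow_one]
    ring
  have hibp' := hibp e_q e_p
  rw [hsign_ibp] at hibp'
  obtain ⟨hystar₁, hystarZ⟩ := Prod.ext_iff.mp hystar
  obtain ⟨hy₁, hyZ⟩ := Prod.ext_iff.mp hy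
  simp only [Prod.fst_neg, Prod.snd_neg, Prod.smul_fst, Prod.smul_snd] at hystar₁ hystarZ hy₁ hyZ
  -- The power balance of the element alone, before the interconnection.
  have helement : pairP e_p f_p + pairQ e_q f_q + (ystar₁ u₁ + ystarZ u_Z)
      + (ustar₁ y₁ + ustarZ y_Z) = 0 := by
    rw [hfp, hfq, hystar₁, hystarZ, hy₁, hyZ]
    simp only [map_add, map_smul, map_neg, smul_eq_mul, hTp, hTq, hsign_tr, zpow_add₀ hne,
      zpow_one, LinearMap.neg_apply, LinearMap.smul_apply]
    grind
  -- The power balance of the interconnection.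
  have hinterconnection : ystarZ u_Z + ustarZ y_Z + ystarR wR + wstarR yR = 0 := by
    rw [hc₁, hc₂, hc₃, hc₄]
    simp only [map_add, map_sub, map_smul, smul_eq_mul, LinearMap.add_apply,
      LinearMap.smul_apply]
    ring
  linarith
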